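/- Let Γ be a non-bipartite graph. If depth R/I = 1, then depth R/I^2 = 0, i.e., the maximal graded ideal m is an associated prime of R/I^2. -/

import Mathlib

open MvPolynomial

noncomputable section

/-- The edge ideal of a graph `Γ` on vertex set `σ`, in `k[x_i : i ∈ σ]`. -/
def edgeIdeal (k : Type) [Field k] {σ : Type} (Γ : SimpleGraph σ) :
    Ideal (MvPolynomial σ k) :=
  Ideal.span { m | ∃ i j : σ, Γ.Adj i j ∧ m = X i * X j }

/-- The maximal graded ideal `(x_i : i ∈ σ)` of `k[x_i : i ∈ σ]`. -/
def maxIdeal (k : Type) [Field k] (σ : Type) : Ideal (MvPolynomial σ k) :=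
  Ideal.span (Set.range (X : σ → MvPolynomial σ k))

/-- `depth R/J = 0`, i.e. the maximal graded ideal is an associated prime of `R/J`. -/
def DepthZero (k : Type) [Field k] {σ : Type} (J : Ideal (MvPolynomial σ k)) : Prop :=
  maxIdeal k σ ∈ associatedPrimes (MvPolynomial σ k) (MvPolynomial σ k ⧸ J)

/-- The `i`-th local cohomology of `R/J` with support in the maximal graded ideal. -/
def locCoh (k : Type) [Field k] {σ : Type} (J : Ideal (MvPolynomial σ k)) (i : ℕ) :=
  (localCohomology (maxIdeal k σ) i).obj (ModuleCat.of _ (MvPolynomial σ k ⧸ J))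

/-- `depth R/J`, defined as the least `i` with `H^i_m(R/J) ≠ 0`. -/
def rDepth (k : Type) [Field k] {σ : Type} (J : Ideal (MvPolynomial σ k)) : ℕ :=
  sInf { i | Nontrivial (locCoh k J i) }

/-- A set `U` of vertices is dominating: every vertex outside `U` is adjacent to a
vertex of `U`. -/
def Dominating {σ : Type} (Γ : SimpleGraph σ) (U : Set σ) : Prop :=
  ∀ v ∉ U, ∃ u ∈ U, Γ.Adj u v

/-- The closed neighborhood `N[v]` of a vertex. -/
def closedNbhd {σ : Type} (Γ : SimpleGraph σ) (v : σ) : Set σ :=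
  insert v { u | Γ.Adj v u }

/-- The closed neighborhood `N[C]` of a set of vertices. -/
def closedNbhdSet {σ : Type} (Γ : SimpleGraph σ) (C : Set σ) : Set σ :=
  ⋃ v ∈ C, closedNbhd Γ v

/-- An odd cycle of length `m` (given as an injective map `ZMod m → σ` with consecutive
vertices adjacent) in `Γ`. -/
def IsOddCycle {σ : Type} (Γ : SimpleGraph σ) (m : ℕ) (c : ZMod m → σ) : Prop :=
  Odd m ∧ 3 ≤ m ∧ Function.Injective c ∧ ∀ i, Γ.Adj (c i) (c (i + 1))

/-- `F` is an independent set of `Γ`. -/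
def IsIndep {σ : Type} [Fintype σ] [DecidableEq σ] (Γ : SimpleGraph σ) (F : Finset σ) : Prop :=
  ∀ i ∈ F, ∀ j ∈ F, ¬ Γ.Adj i j

/-- `F` is a maximal independent set of `Γ`. -/
def IsMaxIndep {σ : Type} [Fintype σ] [DecidableEq σ] (Γ : SimpleGraph σ) (F : Finset σ) : Prop :=
  IsIndep Γ F ∧ ∀ G : Finset σ, IsIndep Γ G → F ⊆ G → G = F

/-- The prime ideal `P_F = (x_i : i ∉ F)`. -/
def PF (k : Type) [Field k] {σ : Type} [Fintype σ] [DecidableEq σ] (F : Finset σ) :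
    Ideal (MvPolynomial σ k) :=
  Ideal.span { m | ∃ i ∉ F, m = X i }

/-- The `t`-th symbolic power `I^{(t)} = ⋂_{F maximal independent} P_F^t` of the edge ideal. -/
def symbPow (k : Type) [Field k] {σ : Type} [Fintype σ] [DecidableEq σ]
    (Γ : SimpleGraph σ) (t : ℕ) : Ideal (MvPolynomial σ k) :=
  ⨅ F ∈ { F : Finset σ | IsMaxIndep Γ F }, PF k F ^ t

/-- The monomial `x^a`. -/
def xPow (k : Type) [Field k] {σ : Type} [Fintype σ] (a : σ → ℕ) : MvPolynomial σ k :=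
  ∏ i, X i ^ a i

/-- The localization `R[x_i^{-1} : i ∈ F]`. -/
abbrev locAt (k : Type) [Field k] {σ : Type} (F : Finset σ) :=
  Localization (Submonoid.closure ((fun i => (X i : MvPolynomial σ k)) '' (F : Set σ)))

/-- The degree complex `Δ_a(J) = {F : x^a ∉ J·R[x_i^{-1} : i ∈ F]}` of a monomial ideal `J`. -/
def degComplex (k : Type) [Field k] {σ : Type} [Fintype σ] (J : Ideal (MvPolynomial σ k))
    (a : σ → ℕ) : Set (Finset σ) :=
  { F | algebraMap (MvPolynomial σ k) (locAt k F) (xPow k a) ∉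
      J.map (algebraMap (MvPolynomial σ k) (locAt k F)) }

/-- `F` is a facet (maximal face) of the complex `Δ`. -/
def IsFacet {σ : Type} (Δ : Set (Finset σ)) (F : Finset σ) : Prop :=
  F ∈ Δ ∧ ∀ G ∈ Δ, F ⊆ G → G = F

/-- The complex `Δ` is disconnected: its vertex set splits into two nonempty parts such that
no face meets both. -/
def ComplexDisconnected {σ : Type} (Δ : Set (Finset σ)) : Prop :=
  ∃ A B : Set σ, A.Nonempty ∧ B.Nonempty ∧ Disjoint A B ∧
    (∀ i, {i} ∈ Δ ↔ i ∈ A ∪ B) ∧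
    ∀ F ∈ Δ, ¬ ((∃ i ∈ F, i ∈ A) ∧ (∃ j ∈ F, j ∈ B))

/-- The polynomial ring `R_v = k[x_i : i ≠ v]`. -/
abbrev Rv (k : Type) [Field k] {σ : Type} (v : σ) := MvPolynomial { i : σ // i ≠ v } k

/-- The localization `R[x_v^{-1}]`. -/
abbrev LocAway (k : Type) [Field k] {σ : Type} (v : σ) :=
  Localization.Away (X v : MvPolynomial σ k)

/-- For an ideal `I` of `R`, the ideal `I_v = I·R[x_v^{-1}] ∩ R_v` of `R_v`. -/
def idealV (k : Type) [Field k] {σ : Type} (I : Ideal (MvPolynomial σ k)) (v : σ) :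
    Ideal (Rv k v) :=
  Ideal.comap ((algebraMap (MvPolynomial σ k) (LocAway k v)).comp
      (MvPolynomial.rename (Subtype.val : { i : σ // i ≠ v } → σ)).toRingHom)
    (I.map (algebraMap (MvPolynomial σ k) (LocAway k v)))

/-- The edge ideal of the induced subgraph `Γ_U` in `k[x_i : i ∈ U]`. -/
def edgeIdealOn (k : Type) [Field k] {σ : Type} (Γ : SimpleGraph σ) (U : Set σ) :
    Ideal (MvPolynomial U k) :=
  Ideal.span { m | ∃ i j : U, Γ.Adj (i : σ) (j : σ) ∧ m = X i * X j }

/-- `Γ` has no isolated vertices. -/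
def NoIsolated {σ : Type} (Γ : SimpleGraph σ) : Prop :=
  ∀ v : σ, ∃ u : σ, Γ.Adj v u

section ExtPart
open CategoryTheory CategoryTheory.Limits

/-- if every hom `J → M` extends to `R`, then `Ext^1(R/J, M) = 0`. -/
theorem ext_one_zero {R : Type} [CommRing R] (J : Ideal R) (M : ModuleCat.{0} R)
    (hJ : ∀ φ : J →ₗ[R] M, ∃ g : M, ∀ p : J, φ p = (p : R) • g) :
    IsZero (((Ext R (ModuleCat.{0} R) 1).obj
      (Opposite.op (ModuleCat.of R (R ⧸ J)))).obj M) := by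
  let P := ProjectiveResolution.of (ModuleCat.of R (R ⧸ J))
  refine IsZero.of_iso ?_ (P.isoExt 1 M)
  rw [← HomologicalComplex.exactAt_iff_isZero_homology,
    HomologicalComplex.exactAt_iff' _ 0 1 2 (by simp) (by simp),
    ShortComplex.moduleCat_exact_iff]
  intro (f : P.complex.X 1 ⟶ M) hf
  have hf : P.complex.d 2 1 ≫ f = 0 := hf
  suffices ∃ F : P.complex.X 0 ⟶ M, P.complex.d 1 0 ≫ F = f from this
  have hexact0 := P.exact₀
  have hexact1 := P.exact_succ 0
  rw [ShortComplex.moduleCat_exact_iff] at hexact0 hexact1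
  have hexact0 : ∀ x : P.complex.X 0, (P.π.f 0).hom x = 0 →
    ∃ y, (P.complex.d 1 0).hom y = x := hexact0
  have hexact1 : ∀ x : P.complex.X 1, (P.complex.d 1 0).hom x = 0 →
    ∃ y, (P.complex.d 2 1).hom y = x := hexact1
  have hf' : ∀ y, f.hom ((P.complex.d 2 1).hom y) = 0 := fun y =>
    LinearMap.congr_fun (congrArg ModuleCat.Hom.hom hf) y
  -- the augmentation
  let π : P.complex.X 0 →ₗ[R] (R ⧸ J) := (P.π.f 0).hom
  have hπd : ∀ y, π ((P.complex.d 1 0).hom y) = 0 := fun y =>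
    LinearMap.congr_fun (congrArg ModuleCat.Hom.hom P.complex_d_comp_π_f_zero) y
  have hπs : Function.Surjective π := by
    have : Epi (P.π.f 0) := inferInstance
    exact (ModuleCat.epi_iff_surjective _).1 this
  have hproj : Module.Projective R (P.complex.X 0) := by
    have : Projective (P.complex.X 0) := inferInstance
    exact (IsProjective.iff_projective (P.complex.X 0)).2 this
  obtain ⟨p, hp⟩ := Module.projective_lifting_property (Submodule.mkQ J) π
    (Submodule.mkQ_surjective J)
  obtain ⟨e, he⟩ := hπs (Submodule.Quotient.mk 1)
  have hp' : ∀ x, (Submodule.Quotient.mk (p x) : R ⧸ J) = π x := fun x =>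
    LinearMap.congr_fun hp x
  -- choose ψ : ker π → M with ψ (d y) = f y
  have hdex : ∀ x : LinearMap.ker π, ∃ y, (P.complex.d 1 0).hom y = x := fun x => hexact0 x x.2
  have hwd : ∀ y y', (P.complex.d 1 0).hom y = (P.complex.d 1 0).hom y' → f.hom y = f.hom y' := by
    intro y y' h
    obtain ⟨z, hz⟩ := hexact1 (y - y') (by rw [map_sub, h, sub_self])
    have := hf' z
    rw [hz, map_sub, sub_eq_zero] at this
    exact this
  choose s hs using hdex
  let ψ : LinearMap.ker π →ₗ[R] M :=
    { toFun := fun x => f.hom (s x)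
      map_add' := fun x y => by
        rw [← map_add]; apply hwd; rw [map_add, hs, hs, hs]; rfl
      map_smul' := fun r x => by
        rw [RingHom.id_apply, ← map_smul]; apply hwd; rw [map_smul, hs, hs]; rfl }
  have hψ : ∀ y (h : π ((P.complex.d 1 0).hom y) = 0), ψ ⟨_, h⟩ = f.hom y := by
    intro y h
    exact hwd _ _ (hs _)
  have hJe : ∀ j : J, π ((j : R) • e) = 0 := by
    intro j
    rw [map_smul, he, ← Submodule.Quotient.mk_smul, Submodule.Quotient.mk_eq_zero]
    simp
  let je : J →ₗ[R] LinearMap.ker π :=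
    { toFun := fun j => ⟨(j : R) • e, hJe j⟩
      map_add' := fun x y => by ext; simp [add_smul]
      map_smul' := fun r x => by ext; simp [mul_smul] }
  obtain ⟨g, hg⟩ := hJ (ψ ∘ₗ je)
  let q : P.complex.X 0 →ₗ[R] LinearMap.ker π :=
    LinearMap.codRestrict _ (LinearMap.id - p.smulRight e) (by
      intro x
      simp only [LinearMap.mem_ker, LinearMap.sub_apply, map_sub, LinearMap.id_apply,
        LinearMap.smulRight_apply, map_smul]
      rw [he, ← Submodule.Quotient.mk_smul, ← hp' x]
      simp)
  refine ⟨ModuleCat.ofHom (ψ ∘ₗ q + p.smulRight g), ?_⟩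
  ext y
  change ψ (q ((P.complex.d 1 0).hom y)) + p ((P.complex.d 1 0).hom y) • g = f.hom y
  have hpJ : p ((P.complex.d 1 0).hom y) ∈ J := by
    rw [← Submodule.Quotient.mk_eq_zero, hp', hπd]
  have h1 : q ((P.complex.d 1 0).hom y) = ⟨_, hπd y⟩ - je ⟨_, hpJ⟩ := by
    ext; rfl
  have h2 := hg ⟨_, hpJ⟩
  rw [h1, map_sub, hψ]
  change ψ (je _) = _ at h2
  rw [h2]
  simp

theorem locCoh_one_zero {R : Type} [CommRing R] (m : Ideal R) (M : ModuleCat.{0} R)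
    (hJ : ∀ t : ℕ, ∀ φ : (m ^ t : Ideal R) →ₗ[R] M, ∃ g : M, ∀ p : (m ^ t : Ideal R), φ p = (p : R) • g) :
    IsZero ((localCohomology m 1).obj M) := by
  unfold localCohomology localCohomology.ofDiagram
  have := localCohomology.hasColimitDiagram.{0,0} (localCohomology.idealPowersDiagram m) 1
  refine IsZero.of_iso ?_ (colimitObjIsoColimitCompEvaluation _ M)
  have hz : IsZero (localCohomology.diagram (localCohomology.idealPowersDiagram m) 1 ⋙ (evaluation _ _).obj M) := by
    rw [Functor.isZero_iff]
    intro t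
    exact ext_one_zero _ M (hJ _)
  rw [IsZero.iff_id_eq_zero]
  apply colimit.hom_ext
  intro j
  exact ((Functor.isZero_iff _).1 hz j).eq_of_src _ _
end ExtPart


section Comb

/-- exponent vectors with independent support -/
def IndExp {n : ℕ} (Γ : SimpleGraph (Fin n)) (a : Fin n →₀ ℕ) : Prop :=
  ∀ i j, a i ≠ 0 → a j ≠ 0 → ¬ Γ.Adj i j

theorem mem_edgeIdeal_iff (k : Type) [Field k] {n : ℕ} (Γ : SimpleGraph (Fin n))
    (p : MvPolynomial (Fin n) k) :
    p ∈ edgeIdeal k Γ ↔ ∀ a, IndExp Γ a → coeff a p = 0 := by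
  have hs : edgeIdeal k Γ = Ideal.span ((fun s => monomial s (1 : k)) ''
      {s | ∃ i j, Γ.Adj i j ∧ s = Finsupp.single i 1 + Finsupp.single j 1}) := by
    unfold edgeIdeal
    congr 1
    ext m
    constructor
    · rintro ⟨i, j, hij, rfl⟩
      exact ⟨_, ⟨i, j, hij, rfl⟩, by simp [X, monomial_mul]⟩
    · rintro ⟨_, ⟨i, j, hij, rfl⟩, rfl⟩
      exact ⟨i, j, hij, by simp [X, monomial_mul]⟩
  rw [hs, mem_ideal_span_monomial_image]
  constructor
  · intro h a ha
    by_contra hc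
    obtain ⟨_, ⟨i, j, hij, rfl⟩, hle⟩ := h a (mem_support_iff.2 hc)
    have h1 := hle i
    have h2 := hle j
    simp at h1 h2
    exact ha i j (by omega) (by omega) hij
  · intro h a ha
    have hna : ¬ IndExp Γ a := fun hi => mem_support_iff.1 ha (h a hi)
    unfold IndExp at hna
    push Not at hna
    obtain ⟨i, j, hi, hj, hij⟩ := hna
    refine ⟨_, ⟨i, j, hij, rfl⟩, ?_⟩
    intro l
    have hne := hij.ne
    simp only [Finsupp.add_apply, Finsupp.single_apply]
    split_ifs with h1 h2 h2
    · exact absurd (h1.trans h2.symm) hne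
    · subst h1; omega
    · subst h2; omega
    · omega

theorem hom_extends (k : Type) [Field k] {n : ℕ} (Γ : SimpleGraph (Fin n))
    [Nontrivial (Fin n)] (hc : (Γᶜ).Preconnected) (t : ℕ)
    (I J : Ideal (MvPolynomial (Fin n) k)) (hI : I = edgeIdeal k Γ)
    (hJ : J = maxIdeal k (Fin n) ^ t)
    (φ : J →ₗ[MvPolynomial (Fin n) k] (MvPolynomial (Fin n) k ⧸ I)) :
    ∃ g : MvPolynomial (Fin n) k ⧸ I,
      ∀ p : J, φ p = (p : MvPolynomial (Fin n) k) • g := by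
  classical
  let E : Fin n → (Fin n →₀ ℕ) := fun i => Finsupp.single i (t + 1)
  let m : Fin n → MvPolynomial (Fin n) k := fun i => monomial (E i) 1
  have hnb : ∀ i, ∃ j, j ≠ i ∧ ¬ Γ.Adj i j := by
    intro i
    obtain ⟨j, hj⟩ := hc.exists_adj_of_nontrivial i
    rw [SimpleGraph.compl_adj] at hj
    exact ⟨j, hj.1.symm, hj.2⟩
  have hm : ∀ i, m i ∈ J := by
    intro i
    have : m i = X i ^ (t + 1) := by simp [m, E, X_pow_eq_monomial]
    rw [this, hJ]
    exact Ideal.pow_le_pow_right (Nat.le_succ t)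
      (Ideal.pow_mem_pow (Ideal.subset_span (Set.mem_range_self i)) _)
  have hF : ∀ i, ∃ F : MvPolynomial (Fin n) k, Ideal.Quotient.mk I F = φ ⟨m i, hm i⟩ :=
    fun i => Ideal.Quotient.mk_surjective _
  choose F hF using hF
  have hsm : ∀ (p q : J), (p : MvPolynomial (Fin n) k) • φ q = (q : MvPolynomial (Fin n) k) • φ p := by
    intro p q
    rw [← map_smul, ← map_smul]
    congr 1
    ext1
    simp [mul_comm]
  have hrel : ∀ i j b, IndExp Γ b → coeff b (m j * F i) = coeff b (m i * F j) := by
    intro i j b hb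
    have h1 : m j * F i - m i * F j ∈ I := by
      rw [← Ideal.Quotient.eq, map_mul, map_mul, hF, hF]
      exact hsm ⟨m j, hm j⟩ ⟨m i, hm i⟩
    have := (mem_edgeIdeal_iff k Γ _).1 (hI ▸ h1) b hb
    rwa [coeff_sub, sub_eq_zero] at this
  have key1 : ∀ i j a, IndExp Γ (a + E i + E j) →
      coeff (a + E i) (F i) = coeff (a + E j) (F j) := by
    intro i j a ha
    have h := hrel i j _ ha
    rw [show a + E i + E j = E j + (a + E i) by abel, coeff_monomial_mul,
      show E j + (a + E i) = E i + (a + E j) by abel, coeff_monomial_mul, one_mul, one_mul] at h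
    exact h
  have key2 : ∀ i j b, i ≠ j → b i < t + 1 → IndExp Γ (b + E j) → coeff b (F i) = 0 := by
    intro i j b hij hbi hb
    have h := hrel i j _ hb
    rw [add_comm b, coeff_monomial_mul, coeff_monomial_mul', if_neg, one_mul] at h
    · exact h
    · intro hle
      have := hle i
      simp [E, Finsupp.single_apply, hij.symm] at this
      omega
  have key2' : ∀ i b, IndExp Γ b → b i < t + 1 → coeff b (F i) = 0 := by
    intro i b hb hbi
    by_cases hex : ∃ j, j ≠ i ∧ b j ≠ 0
    · obtain ⟨j, hji, hbj⟩ := hex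
      refine key2 i j b hji.symm hbi ?_
      have hs : ∀ u, (b + E j) u ≠ 0 → b u ≠ 0 := by
        intro u hu
        by_cases huj : u = j
        · rw [huj]; exact hbj
        · simpa [E, Finsupp.single_apply, Ne.symm huj] using hu
      exact fun u v hu hv => hb u v (hs u hu) (hs v hv)
    · push Not at hex
      obtain ⟨j, hji, hadj⟩ := hnb i
      refine key2 i j b hji.symm hbi ?_
      have hs : ∀ u, (b + E j) u ≠ 0 → u = i ∨ u = j := by
        intro u hu
        by_contra hcon
        push Not at hcon
        apply hu
        simp [E, Finsupp.single_apply, hcon.2.symm, hex u hcon.1]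
      intro u v hu hv huv
      rcases hs u hu with rfl | rfl <;> rcases hs v hv with rfl | rfl
      · exact huv.ne rfl
      · exact hadj huv
      · exact hadj huv.symm
      · exact huv.ne rfl
  have key3 : ∀ a i j, IndExp Γ (a + E i) → IndExp Γ (a + E j) →
      coeff (a + E i) (F i) = coeff (a + E j) (F j) := by
    intro a i j hi hj
    have hsub : ∀ u l, a u ≠ 0 → (a + E l) u ≠ 0 := by
      intro u l hu
      rw [Finsupp.add_apply]; omega
    have hself : ∀ l, (a + E l) l ≠ 0 := by
      intro l
      simp [E]
    by_cases ha : a = 0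
    · subst ha
      have hstep : ∀ u v, (Γᶜ).Adj u v → coeff (0 + E u) (F u) = coeff (0 + E v) (F v) := by
        intro u v huv
        rw [SimpleGraph.compl_adj] at huv
        apply key1
        have hs : ∀ w, (0 + E u + E v) w ≠ 0 → w = u ∨ w = v := by
          intro w hw
          by_contra hcon
          push Not at hcon
          apply hw
          simp [E, Finsupp.single_apply, hcon.1.symm, hcon.2.symm]
        intro x y hx hy hxy
        rcases hs x hx with rfl | rfl <;> rcases hs y hy with rfl | rfl
        · exact hxy.ne rfl
        · exact huv.2 hxy
        · exact huv.2 hxy.symm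
        · exact hxy.ne rfl
      obtain ⟨w⟩ := hc i j
      clear hi hj
      induction w with
      | nil => rfl
      | cons h _ ih => exact (hstep _ _ h).trans ih
    · obtain ⟨l, hl⟩ : ∃ l, a l ≠ 0 := by
        by_contra hcon
        push Not at hcon
        exact ha (Finsupp.ext hcon)
      have hgo : ∀ u, IndExp Γ (a + E u) → coeff (a + E u) (F u) = coeff (a + E l) (F l) := by
        intro u hu
        apply key1
        have hs : ∀ w, (a + E u + E l) w ≠ 0 → (a + E u) w ≠ 0 := by
          intro w hw
          by_cases hwl : w = l
          · subst hwl; exact hsub _ _ hl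
          · simpa [E, Finsupp.single_apply, Ne.symm hwl] using hw
        exact fun x y hx hy => hu x y (hs x hx) (hs y hy)
      rw [hgo i hi, hgo j hj]
  -- the polynomial `g`
  let gf : (Fin n →₀ ℕ) → k := fun a =>
    if h : ∃ i, IndExp Γ (a + E i) then coeff (a + E h.choose) (F h.choose) else 0
  have hgf : ∀ a i, IndExp Γ (a + E i) → gf a = coeff (a + E i) (F i) := by
    intro a i hi
    have hex : ∃ i, IndExp Γ (a + E i) := ⟨i, hi⟩
    simp only [gf, dif_pos hex]
    exact key3 a _ _ hex.choose_spec hi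
  have hfin : (Function.support gf).Finite := by
    refine Set.Finite.subset (s := ⋃ i, (fun a => a + E i) ⁻¹' ((F i).support : Set (Fin n →₀ ℕ)))
      ?_ ?_
    · refine Set.finite_iUnion fun i => ?_
      exact Set.Finite.preimage (add_left_injective (E i)).injOn (Finset.finite_toSet _)
    · intro a ha
      by_cases hex : ∃ i, IndExp Γ (a + E i)
      · obtain ⟨i, hi⟩ := hex
        rw [Function.mem_support, hgf a i hi] at ha
        exact Set.mem_iUnion.2 ⟨i, Finset.mem_coe.2 (mem_support_iff.2 ha)⟩
      · exact absurd (by simp only [gf, dif_neg hex]) ha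
  obtain ⟨G, hG⟩ : ∃ G : MvPolynomial (Fin n) k, ∀ a, coeff a G = gf a := by
    refine ⟨∑ a ∈ hfin.toFinset, monomial a (gf a), fun a => ?_⟩
    rw [coeff_sum]
    simp only [coeff_monomial]
    rw [Finset.sum_ite_eq']
    split_ifs with h
    · rfl
    · by_contra hne
      exact h (by simpa using Ne.symm hne)
  have hFG : ∀ i, F i - m i * G ∈ I := by
    intro i
    rw [hI, mem_edgeIdeal_iff]
    intro b hb
    rw [coeff_sub, coeff_monomial_mul', sub_eq_zero]
    split_ifs with hle
    · have hb' : b - E i + E i = b := tsub_add_cancel_of_le hle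
      rw [hG, hgf (b - E i) i (by rwa [hb']), hb', one_mul]
    · apply key2' i b hb
      by_contra hcon
      apply hle
      rw [Finsupp.single_le_iff]
      omega
  -- elements killed by all `m i` vanish
  have hdep : ∀ q : MvPolynomial (Fin n) k, (∀ i, m i * q ∈ I) → q ∈ I := by
    intro q hq
    rw [hI, mem_edgeIdeal_iff]
    intro a ha
    obtain ⟨i, hi⟩ : ∃ i, IndExp Γ (E i + a) := by
      by_cases ha0 : a = 0
      · obtain ⟨i⟩ : Nonempty (Fin n) := inferInstance
        refine ⟨i, ?_⟩
        have hs : ∀ w, (E i + a) w ≠ 0 → w = i := by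
          intro w hw
          by_contra hcon
          apply hw
          simp [E, Finsupp.single_apply, Ne.symm hcon, ha0]
        intro x y hx hy hxy
        rw [hs x hx, hs y hy] at hxy
        exact hxy.ne rfl
      · obtain ⟨l, hl⟩ : ∃ l, a l ≠ 0 := by
          by_contra hcon
          push Not at hcon
          exact ha0 (Finsupp.ext hcon)
        refine ⟨l, ?_⟩
        have hs : ∀ w, (E l + a) w ≠ 0 → a w ≠ 0 := by
          intro w hw
          by_cases hwl : w = l
          · subst hwl; exact hl
          · simpa [E, Finsupp.single_apply, Ne.symm hwl] using hw
        exact fun x y hx hy => ha x y (hs x hx) (hs y hy)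
    have := (mem_edgeIdeal_iff k Γ _).1 (hI ▸ hq i) _ hi
    rwa [coeff_monomial_mul, one_mul] at this
  refine ⟨Ideal.Quotient.mk I G, fun p => ?_⟩
  obtain ⟨q, hq⟩ := Ideal.Quotient.mk_surjective (φ p)
  have h1 : q - p * G ∈ I := by
    apply hdep
    intro i
    have h2 : m i * q - p * F i ∈ I := by
      rw [← Ideal.Quotient.eq, map_mul, map_mul, hq, hF]
      exact hsm ⟨m i, hm i⟩ p
    have h3 : m i * (q - p * G) = (m i * q - p * F i) + p * (F i - m i * G) := by ring
    rw [h3]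
    exact I.add_mem h2 (I.mul_mem_left _ (hFG i))
  rw [← hq, Ideal.Quotient.eq.2 h1, map_mul]
  rfl

theorem maxIdeal_isMaximal (k : Type) [Field k] (n : ℕ) : (maxIdeal k (Fin n)).IsMaximal := by
  have : maxIdeal k (Fin n) = RingHom.ker (constantCoeff : MvPolynomial (Fin n) k →+* k) := by
    ext p
    unfold maxIdeal
    rw [← Set.image_univ, mem_ideal_span_X_image, RingHom.mem_ker, constantCoeff_eq]
    constructor
    · intro h
      by_contra hc
      obtain ⟨i, _, hi⟩ := h 0 (mem_support_iff.2 hc)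
      exact hi rfl
    · intro h a ha
      by_contra hcon
      push Not at hcon
      have : a = 0 := Finsupp.ext fun i => hcon i trivial
      subst this
      exact mem_support_iff.1 ha h
  rw [this]
  exact RingHom.ker_isMaximal_of_surjective _ (fun c => ⟨C c, by simp⟩)

theorem depthZero_of_triangle (k : Type) [Field k] {n : ℕ} (Γ : SimpleGraph (Fin n))
    (x y w : Fin n)
    (h : ∀ i, X i * (X x * X y * X w) ∈ edgeIdeal k Γ ^ 2) :
    DepthZero k (edgeIdeal k Γ ^ 2) := by
  have hmax := maxIdeal_isMaximal k n
  have hnot : (X x * X y * X w : MvPolynomial (Fin n) k) ∉ edgeIdeal k Γ ^ 2 := by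
    intro hmem
    let ev : MvPolynomial (Fin n) k →+* Polynomial k :=
      (aeval (fun _ => (Polynomial.X : Polynomial k))).toRingHom
    have hev : ∀ i, ev (X i) = Polynomial.X := fun i => by simp [ev]
    have h1 : (edgeIdeal k Γ).map ev ≤ Ideal.span {(Polynomial.X : Polynomial k) ^ 2} := by
      rw [edgeIdeal, Ideal.map_span, Ideal.span_le]
      rintro _ ⟨_, ⟨i, j, _, rfl⟩, rfl⟩
      rw [map_mul, hev, hev, ← pow_two]
      exact Ideal.subset_span rfl
    have h2 := Ideal.mem_map_of_mem ev hmem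
    rw [Ideal.map_pow] at h2
    have h3 := Ideal.pow_right_mono h1 2 h2
    rw [Ideal.span_singleton_pow, Ideal.mem_span_singleton, map_mul, map_mul, hev, hev, hev,
      ← pow_mul] at h3
    have h4 := Polynomial.X_pow_dvd_iff.1 h3 3 (by norm_num)
    rw [show (Polynomial.X * Polynomial.X * Polynomial.X : Polynomial k) = Polynomial.X ^ 3 by ring]
      at h4
    simp at h4
  refine Submodule.isAssociatedPrime_iff.2 ⟨hmax.isPrime,
    Ideal.Quotient.mk _ (X x * X y * X w), ?_⟩
  refine hmax.eq_of_le ?_ ?_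
  · rw [Ne, Ideal.eq_top_iff_one, Submodule.mem_colon_singleton, one_smul, Submodule.mem_bot,
      Ideal.Quotient.eq_zero_iff_mem]
    exact hnot
  · unfold maxIdeal
    rw [Ideal.span_le]
    rintro _ ⟨i, rfl⟩
    rw [SetLike.mem_coe, Submodule.mem_colon_singleton, Submodule.mem_bot]
    exact Ideal.Quotient.eq_zero_iff_mem.2 (h i)

theorem depthZero_of_join (k : Type) [Field k] {n : ℕ} (Γ : SimpleGraph (Fin n))
    (A : Set (Fin n)) (hA : ∀ a ∈ A, ∀ b ∉ A, Γ.Adj a b) (x y w : Fin n) (hx : x ∈ A)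
    (hy : y ∈ A) (hw : w ∉ A) (hxy : Γ.Adj x y) : DepthZero k (edgeIdeal k Γ ^ 2) := by
  refine depthZero_of_triangle k Γ x y w fun i => ?_
  have hmem : ∀ u v, Γ.Adj u v → (X u * X v : MvPolynomial (Fin n) k) ∈ edgeIdeal k Γ :=
    fun u v huv => Ideal.subset_span ⟨u, v, huv, rfl⟩
  rw [pow_two]
  by_cases hi : i ∈ A
  · rw [show (X i * (X x * X y * X w) : MvPolynomial (Fin n) k) = (X i * X w) * (X x * X y) by ring]
    exact Ideal.mul_mem_mul (hmem _ _ (hA i hi w hw)) (hmem _ _ hxy)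
  · rw [show (X i * (X x * X y * X w) : MvPolynomial (Fin n) k) = (X x * X i) * (X y * X w) by ring]
    exact Ideal.mul_mem_mul (hmem _ _ (hA x hx i hi)) (hmem _ _ (hA y hy w hw))

end Comb

/-- Let `Γ` be a non-bipartite graph. If `depth R/I = 1`, then
`depth R/I^2 = 0`, i.e. the maximal graded ideal is an associated prime of `R/I^2`. -/
theorem stmt15 (k : Type) [Field k] (n : ℕ) (Γ : SimpleGraph (Fin n))
    (hiso : NoIsolated Γ) (hnb : ¬ Γ.Colorable 2)
    (h : rDepth k (edgeIdeal k Γ) = 1) :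
    DepthZero k ((edgeIdeal k Γ) ^ 2) := by
  by_cases hc : (Γᶜ).Preconnected
  · exfalso
    have hne : Nonempty (Fin n) := by
      by_contra hcon
      rw [not_nonempty_iff] at hcon
      exact hnb ⟨SimpleGraph.Coloring.mk (fun v => hcon.elim v) (fun {v} => hcon.elim v)⟩
    have hnt : Nontrivial (Fin n) := by
      obtain ⟨v⟩ := hne
      obtain ⟨u, hu⟩ := hiso v
      exact ⟨v, u, hu.ne⟩
    have hmem : 1 ∈ { i | Nontrivial (locCoh k (edgeIdeal k Γ) i) } := by
      rw [← h]
      refine Nat.sInf_mem (Nat.nonempty_of_pos_sInf ?_)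
      change 0 < rDepth k (edgeIdeal k Γ)
      omega
    have hz := locCoh_one_zero (maxIdeal k (Fin n))
      (ModuleCat.of _ (MvPolynomial (Fin n) k ⧸ edgeIdeal k Γ)) (fun t φ => hom_extends k Γ hc t _ _ rfl rfl φ)
    have hs := ModuleCat.subsingleton_of_isZero hz
    exact not_subsingleton_iff_nontrivial.2 hmem hs
  · unfold SimpleGraph.Preconnected at hc
    push Not at hc
    obtain ⟨u, v, huv⟩ := hc
    let A : Set (Fin n) := {w | (Γᶜ).Reachable u w}
    have hA : ∀ a ∈ A, ∀ b ∉ A, Γ.Adj a b := by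
      intro a ha b hb
      by_contra hcon
      apply hb
      have hadj : (Γᶜ).Adj a b := by
        rw [SimpleGraph.compl_adj]
        exact ⟨fun hab => hb (hab ▸ ha), hcon⟩
      exact SimpleGraph.Reachable.trans ha hadj.reachable
    have huA : u ∈ A := SimpleGraph.Reachable.refl u
    have hvA : v ∉ A := huv
    by_cases hedge : ∃ x y, Γ.Adj x y ∧ (x ∈ A ↔ y ∈ A)
    · obtain ⟨x, y, hxy, hiff⟩ := hedge
      by_cases hx : x ∈ A
      · exact depthZero_of_join k Γ A hA x y v hx (hiff.1 hx) hvA hxy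
      · exact depthZero_of_join k Γ Aᶜ
          (fun a ha b hb => (hA b (by simpa using hb) a ha).symm) x y u hx
          (fun hy => hx (hiff.2 hy)) (by simpa using huA) hxy
    · exfalso
      push Not at hedge
      classical
      have hcol : Γ.Coloring Bool := SimpleGraph.Coloring.mk (fun w => decide (w ∈ A)) (by
        intro x y hxy heq
        have := hedge x y hxy
        rw [decide_eq_decide] at heq
        tauto)
      exact hnb (by simpa using hcol.colorable)

end
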